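/- Let k be an algebraically closed field of characteristic 0, let r ≥ 2, and let d_1, d_2 be positive integers with d_1·d_2 ≥ 4. Let F_1, F_2 ∈ k[z_1,…,z_{r+3}] be homogeneous polynomials of degrees d_1 and d_2 whose common zero locus is Z ⊂ P^{r+2}. Suppose that the ideal generated by F_1 and F_2 in k[z_1,…,z_{r+3}] is prime and that k[z_1,…,z_{r+3}]/(F_1,F_2) has Krull dimension r+1 (so Z is an integral r-dimensional intersection of two hypersurfaces), and that the singular locus of Z has codimension at least three in Z; i.e. the Krull dimension of k[z_1,…,z_{r+3}]/J is at most r−2, where J is generated by F_1, F_2 and all 2×2 minors of the Jacobian matrix of (F_1,F_2). Then only finitely many r-dimensional k-linear subspaces of k^{r+3} are contained in {z ∈ k^{r+3} : F_1(z) = F_2(z) = 0} (i.e. only finitely many (r−1)-planes lie on Z). -/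

import Mathlib

open MvPolynomial
open scoped Matrix

/-!
Cover the variety of `r`-dimensional subspaces by charts `Q * M = 1`, in which a subspace is the
column space of a unique matrix `M`. At a subspace `W` on which `F₁` and `F₂` vanish, the gradients
of `F₁` and `F₂` along `W` are conormal to `W`; as `W` has codimension three, they are two triples
of forms on `W`, of degrees `d₁ - 1` and `d₂ - 1`. A tangent vector at `W` to the scheme of planes
on `Z` is a triple of linear forms on `W` orthogonal to both. If it is nonzero, then it is
proportional to the cross product of the two triples; as that has degree `(d₁ - 1) + (d₂ - 1) ≥ 2`,
unique factorization shows that its entries have a common nonunit factor `h`. All the Jacobian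
minors vanish on the divisor `h = 0` of `W`, so the singular locus has codimension at most two, a
contradiction. Hence every Zariski tangent space of the scheme of planes is zero, its points are
minimal primes, and there are finitely many.
-/

section KrullDimension

theorem height_eq_height_under_add_one {R : Type*} [CommRing R] [IsNoetherianRing R]
    [IsJacobsonRing R] (M : Ideal (Polynomial R)) [M.IsMaximal] :
    M.height = (M.under R).height + 1 :=
  have : (M.under R).IsMaximal := Polynomial.isMaximal_comap_C_of_isJacobsonRing M
  Polynomial.height_eq_height_add_one (M.under R) M

variable {k σ : Type*} [Field k]

theorem height_eq_card_of_isMaximal [Finite σ] (m : Ideal (MvPolynomial σ k)) [m.IsMaximal] :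
    m.height = Nat.card σ := by
  induction σ using Finite.induction_empty_option with
  | @of_equiv α β e ih =>
    let E := (renameEquiv k e).toRingEquiv
    have : (m.comap E).IsMaximal := Ideal.comap_isMaximal_of_equiv E
    rw [← E.height_comap, ih (m.comap E), Nat.card_congr e]
  | h_empty =>
    let := ((isEmptyRingEquiv k PEmpty).toMulEquiv.isField (Field.toIsField k)).toField
    obtain rfl : m = ⊥ := m.eq_bot_or_top.resolve_right Ideal.IsPrime.ne_top'
    simp
  | @h_option α _ ih =>
    let E := (optionEquivLeft k α).toRingEquiv
    let M : Ideal (Polynomial (MvPolynomial α k)) := m.comap E.symm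
    have : M.IsMaximal := Ideal.comap_isMaximal_of_equiv E.symm
    have : (M.under (MvPolynomial α k)).IsMaximal :=
      Polynomial.isMaximal_comap_C_of_isJacobsonRing M
    rw [← E.symm.height_comap, height_eq_height_under_add_one M, ih, Finite.card_option,
      Nat.cast_succ]

theorem card_le_ringKrullDim_quotient_span_singleton_add_one [Finite σ] {h : MvPolynomial σ k}
    (hh : ¬ IsUnit h) :
    (Nat.card σ : WithBot ℕ∞) ≤ ringKrullDim (MvPolynomial σ k ⧸ Ideal.span {h}) + 1 := by
  obtain ⟨m, hm, hhm⟩ := exists_max_ideal_of_mem_nonunits hh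
  simpa [height_eq_card_of_isMaximal m] using Ideal.height_le_ringKrullDim_quotient_add_one hhm

theorem card_le_ringKrullDim_quotient_add_one [Finite σ] {R : Type*} [CommRing R] {J : Ideal R}
    {h : MvPolynomial σ k} (hh : ¬ IsUnit h) {f : R →+* MvPolynomial σ k}
    (hf : Function.Surjective f) (hJ : J ≤ (Ideal.span {h}).comap f) :
    (Nat.card σ : WithBot ℕ∞) ≤ ringKrullDim (R ⧸ J) + 1 := by
  have hdim := ringKrullDim_le_of_surjective (Ideal.quotientMap (Ideal.span {h}) f hJ)
    (Ideal.quotientMap_surjective hf)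
  grw [card_le_ringKrullDim_quotient_span_singleton_add_one hh, hdim]

end KrullDimension

section ZariskiTangentSpace

theorem mem_minimalPrimes_of_le_sq_sup {R : Type*} [CommRing R] [IsNoetherianRing R]
    {I m : Ideal R} [m.IsPrime] (hI : I ≤ m) (hm : m ≤ m ^ 2 ⊔ I) : m ∈ I.minimalPrimes := by
  obtain ⟨P, hP, hPm⟩ := Ideal.exists_minimalPrimes_le hI
  have := hP.1.1
  have hidem : IsIdempotentElem (m.map (Ideal.Quotient.mk P)) := by
    refine le_antisymm Ideal.mul_le_left ?_
    grw [hm, hP.1.2]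
    rw [Ideal.map_sup, Ideal.map_quotient_self, sup_bot_eq, Ideal.map_pow, pow_two]
  have hcomap : (m.map (Ideal.Quotient.mk P)).comap (Ideal.Quotient.mk P) = m := by
    rw [Ideal.comap_map_of_surjective' _ Ideal.Quotient.mk_surjective, Ideal.mk_ker,
      sup_eq_left.2 hPm]
  rcases (Ideal.isIdempotentElem_iff_eq_bot_or_top _ (IsNoetherian.noetherian _)).1 hidem with
    hbot | htop
  · rw [Ideal.map_eq_bot_iff_le_ker, Ideal.mk_ker] at hbot
    rwa [le_antisymm hbot hPm]
  · rw [htop, Ideal.comap_top] at hcomap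
    exact absurd hcomap.symm Ideal.IsPrime.ne_top'

variable {k κ : Type*} [Field k]

/-- The gradient of a polynomial at the point `p`, as a linear function of the polynomial. -/
noncomputable def gradientAt (p : κ → k) : MvPolynomial κ k →ₗ[k] κ → k :=
  LinearMap.pi fun i => (aeval p).toLinearMap ∘ₗ (pderiv i).toLinearMap

theorem gradientAt_apply (p : κ → k) (f : MvPolynomial κ k) (i : κ) :
    gradientAt p f i = eval p (pderiv i f) := by
  simp [gradientAt, aeval_eq_eval]

theorem ker_eval_injective : Function.Injective fun p : κ → k => RingHom.ker (eval p) := by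
  intro p q hpq
  ext i
  have hmem : X i - C (q i) ∈ RingHom.ker (eval p) := by
    rw [show RingHom.ker (eval p) = _ from hpq]
    simp [RingHom.mem_ker]
  simpa [RingHom.mem_ker, sub_eq_zero] using hmem

variable [Fintype κ]

theorem sub_taylor_mem_ker_eval_sq (p : κ → k) (f : MvPolynomial κ k) :
    f - C (eval p f) - ∑ i, C (gradientAt p f i) * (X i - C (p i)) ∈ RingHom.ker (eval p) ^ 2 := by
  classical
  induction f using MvPolynomial.induction_on with
  | C a => simp [gradientAt_apply]
  | add f g hf hg =>
    convert add_mem hf hg using 1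
    simp only [map_add, Pi.add_apply, add_mul, Finset.sum_add_distrib]
    ring
  | mul_X f j hf =>
    have hf0 : f - C (eval p f) ∈ RingHom.ker (eval p) := by simp [RingHom.mem_ker]
    have hX0 : X j - C (p j) ∈ RingHom.ker (eval p) := by simp [RingHom.mem_ker]
    have hleibniz : ∀ i, gradientAt p (f * X j) i =
        p j * gradientAt p f i + eval p f * Pi.single (M := fun _ => k) j 1 i := by
      intro i
      rw [gradientAt_apply, gradientAt_apply, pderiv_mul, pderiv_X]
      by_cases hij : i = j <;> simp [hij, mul_comm]
    have hsum : ∑ i, C (gradientAt p (f * X j) i) * (X i - C (p i)) =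
        C (p j) * ∑ i, C (gradientAt p f i) * (X i - C (p i)) +
          C (eval p f) * (X j - C (p j)) := by
      simp [hleibniz, add_mul, Finset.sum_add_distrib, Finset.mul_sum, mul_assoc, Pi.single_apply,
        apply_ite C, ite_mul]
    convert add_mem (pow_two (RingHom.ker (eval p)) ▸ Ideal.mul_mem_mul hf0 hX0)
      (Ideal.mul_mem_left _ (C (p j)) hf) using 1
    rw [hsum]
    simp
    ring

theorem ker_eval_le_sq_sup_span {G : Set (MvPolynomial κ k)} {p : κ → k}
    (hG : ∀ g ∈ G, eval p g = 0) (ht : ∀ t, (∀ g ∈ G, gradientAt p g ⬝ᵥ t = 0) → t = 0) :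
    RingHom.ker (eval p) ≤ RingHom.ker (eval p) ^ 2 ⊔ Ideal.span G := by
  classical
  have hspan : (Submodule.span k G).map (gradientAt p) = ⊤ := by
    by_contra hne
    obtain ⟨φ, hφ, hker⟩ := Submodule.exists_le_ker_of_lt_top _ (lt_top_iff_ne_top.2 hne)
    obtain ⟨t, rfl⟩ := (dotProductEquiv k κ).surjective φ
    refine hφ ((map_eq_zero_iff _ (dotProductEquiv k κ).injective).2 (ht t fun g hg => ?_))
    rw [dotProduct_comm]
    exact hker (Submodule.mem_map_of_mem (Submodule.subset_span hg))
  intro f hf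
  obtain ⟨g, hg, hgf⟩ : gradientAt p f ∈ (Submodule.span k G).map (gradientAt p) := hspan ▸ trivial
  have hgI : g ∈ Ideal.span G := Submodule.span_le_restrictScalars k _ G hg
  have hg0 : eval p g = 0 := (Ideal.span_le (I := RingHom.ker (eval p))).2 hG hgI
  have hsub := sub_taylor_mem_ker_eval_sq p (f - g)
  simp only [map_sub, hgf, hg0, RingHom.mem_ker.1 hf, sub_self, Pi.zero_apply, map_zero, zero_mul,
    Finset.sum_const_zero, sub_zero] at hsub
  exact sub_add_cancel f g ▸ Submodule.add_mem_sup hsub hgI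

theorem finite_zeroLocus_of_tangent_eq_zero (G : Set (MvPolynomial κ k))
    (hG : ∀ p : κ → k, (∀ g ∈ G, eval p g = 0) →
      ∀ t, (∀ g ∈ G, gradientAt p g ⬝ᵥ t = 0) → t = 0) :
    {p : κ → k | ∀ g ∈ G, eval p g = 0}.Finite := by
  refine .of_finite_image (f := fun p => RingHom.ker (eval p)) ?_ ker_eval_injective.injOn
  refine (Ideal.finite_minimalPrimes_of_isNoetherianRing _ (Ideal.span G)).subset ?_
  rintro _ ⟨p, hp, rfl⟩
  have := RingHom.ker_isPrime (eval p)
  exact mem_minimalPrimes_of_le_sq_sup (Ideal.span_le.2 hp) (ker_eval_le_sq_sup_span hp (hG p hp))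

end ZariskiTangentSpace

section LinearSubstitution

theorem derivation_aeval {k ι B M : Type*} [CommSemiring k] [CommSemiring B] [Algebra k B]
    [AddCommMonoid M] [Module k M] [Module B M] [Fintype ι] (D : Derivation k B M) (b : ι → B)
    (F : MvPolynomial ι k) : D (aeval b F) = ∑ i, aeval b (pderiv i F) • D (b i) := by
  classical
  induction F using MvPolynomial.induction_on with
  | C a => simp
  | add F G hF hG => simp only [map_add, hF, hG, add_smul, Finset.sum_add_distrib]
  | mul_X F j hF =>
    simp [hF, Derivation.leibniz, pderiv_X, Pi.single_apply, add_smul, Finset.sum_add_distrib,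
      Finset.smul_sum, mul_smul, apply_ite, ite_smul]

variable {k ι κ σ : Type*} [CommRing k] [Fintype σ]

theorem toMvPolynomial_eq_mulVec (M : Matrix ι σ k) : M.toMvPolynomial = M.map C *ᵥ X := by
  ext1 i
  simp [Matrix.toMvPolynomial, Matrix.mulVec, dotProduct, C_mul_X_eq_monomial]

theorem toMvPolynomial_mul_eq_mulVec [Fintype ι] (N : Matrix κ ι k) (M : Matrix ι σ k) :
    (N * M).toMvPolynomial = N.map C *ᵥ M.toMvPolynomial := by
  simp only [toMvPolynomial_eq_mulVec, Matrix.map_mul, Matrix.mulVec_mulVec]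

theorem pderiv_toMvPolynomial (M : Matrix ι σ k) (i : ι) (j : σ) :
    pderiv j (M.toMvPolynomial i) = C (M i j) := by
  classical
  simp [toMvPolynomial_eq_mulVec, Matrix.mulVec, dotProduct, pderiv_X, Pi.single_apply]

theorem toMvPolynomial_injective :
    Function.Injective (Matrix.toMvPolynomial : Matrix ι σ k → ι → MvPolynomial σ k) := by
  intro M N h
  ext i j
  exact C_injective σ k (by
    simpa only [pderiv_toMvPolynomial] using congrArg (pderiv j) (congrFun h i))

/-- The pullback of polynomial functions along the linear map `x ↦ M *ᵥ x`. -/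
noncomputable def linearSubst (M : Matrix ι σ k) : MvPolynomial ι k →ₐ[k] MvPolynomial σ k :=
  bind₁ M.toMvPolynomial

theorem eval_linearSubst (M : Matrix ι σ k) (F : MvPolynomial ι k) (x : σ → k) :
    eval x (linearSubst M F) = eval (M *ᵥ x) F := by
  have hM : (fun i => aeval x (M.toMvPolynomial i)) = M *ᵥ x :=
    funext (M.toMvPolynomial_eval_eq_apply · x)
  simp only [← aeval_eq_eval, linearSubst, aeval_bind₁, hM]

theorem isHomogeneous_linearSubst {F : MvPolynomial ι k} {d : ℕ} (hF : F.IsHomogeneous d)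
    (M : Matrix ι σ k) : (linearSubst M F).IsHomogeneous d :=
  one_mul d ▸ hF.aeval _ M.toMvPolynomial_isHomogeneous

theorem linearSubst_surjective [DecidableEq σ] [Fintype ι] {Q : Matrix σ ι k} {M : Matrix ι σ k}
    (hQM : Q * M = 1) : Function.Surjective (linearSubst M) := by
  have hid : (linearSubst M).comp (linearSubst Q) = AlgHom.id k _ := by
    ext1 i
    simp [linearSubst, ← Matrix.toMvPolynomial_mul, hQM]
  exact fun F => ⟨linearSubst Q F, DFunLike.congr_fun hid F⟩

theorem pderiv_linearSubst [Fintype ι] (M : Matrix ι σ k) (F : MvPolynomial ι k) (j : σ) :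
    pderiv j (linearSubst M F) = ∑ i, linearSubst M (pderiv i F) * C (M i j) := by
  simp only [linearSubst, bind₁, derivation_aeval, pderiv_toMvPolynomial, smul_eq_mul]

end LinearSubstitution

section Proportionality

theorem exists_eq_mul_or_forall_dvd_of_prime {R ι : Type*} [CommRing R] [IsDomain R]
    {l m : ι → R} {i : ι} (hi : Prime (l i)) (hlm : ∀ j, l i * m j = l j * m i) :
    (∃ q, ∀ j, m j = l j * q) ∨ ∀ j, m i ∣ m j := by
  by_cases hdvd : l i ∣ m i
  · obtain ⟨q, hq⟩ := hdvd
    refine .inl ⟨q, fun j => mul_left_cancel₀ hi.ne_zero ?_⟩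
    rw [hlm, hq, mul_left_comm]
  · refine .inr fun j => ?_
    obtain ⟨c, hc⟩ := (hi.dvd_or_dvd ⟨m j, (hlm j).symm⟩).resolve_right hdvd
    refine ⟨c, mul_left_cancel₀ hi.ne_zero ?_⟩
    rw [hlm, hc]
    ring

variable {k σ : Type*} [Field k]

theorem prime_of_isHomogeneous_one {l : MvPolynomial σ k} (hl : l.IsHomogeneous 1) (hl0 : l ≠ 0) :
    Prime l := by
  have hdeg := hl.totalDegree hl0
  refine (irreducible_of_totalDegree_eq_one hdeg fun c hc => ?_).prime
  refine isUnit_iff_ne_zero.2 ?_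
  rintro rfl
  exact hl0 (MvPolynomial.ext _ _ fun m => by simpa using hc m)

theorem eq_zero_of_isUnit_of_isHomogeneous {m : MvPolynomial σ k} (hu : IsUnit m) {d : ℕ}
    (hm : m.IsHomogeneous d) : d = 0 := by
  obtain ⟨c, -, rfl⟩ := isUnit_iff_eq_C_of_isReduced.1 hu
  exact hm.inj_right (isHomogeneous_C σ c) hu.ne_zero

theorem exists_not_isUnit_forall_dvd {ι : Type*} {l m : ι → MvPolynomial σ k} {d : ℕ}
    (hl : ∀ i, (l i).IsHomogeneous 1) (hl0 : l ≠ 0) (hd : 2 ≤ d)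
    (hm : ∀ i, (m i).IsHomogeneous d) (hlm : ∀ i j, l i * m j = l j * m i) :
    ∃ h, ¬ IsUnit h ∧ ∀ i, h ∣ m i := by
  obtain ⟨i, hi⟩ := Function.ne_iff.1 hl0
  rcases exists_eq_mul_or_forall_dvd_of_prime (prime_of_isHomogeneous_one (hl i) hi) (hlm i) with
    ⟨q, hq⟩ | hdvd
  · refine ⟨q, fun hu => ?_, fun j => ⟨l j, by rw [hq, mul_comm]⟩⟩
    obtain ⟨c, -, rfl⟩ := isUnit_iff_eq_C_of_isReduced.1 hu
    have hd1 : d = 1 := (hm i).inj_right (hq i ▸ (hl i).mul (isHomogeneous_C σ c))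
      (hq i ▸ mul_ne_zero hi hu.ne_zero)
    omega
  · exact ⟨m i, fun hu => by have := eq_zero_of_isUnit_of_isHomogeneous hu (hm i); omega, hdvd⟩

theorem mul_cross_eq_of_dotProduct_eq_zero {R : Type*} [CommRing R] {a b l : Fin 3 → R}
    (ha : a ⬝ᵥ l = 0) (hb : b ⬝ᵥ l = 0) (i j : Fin 3) :
    l i * (a ⨯₃ b) j = l j * (a ⨯₃ b) i := by
  have hcross : l ⨯₃ (a ⨯₃ b) = 0 := by
    rw [cross_cross_eq_smul_sub_smul', dotProduct_comm l b, hb, ha]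
    simp
  have h0 := congrFun hcross 0
  have h1 := congrFun hcross 1
  have h2 := congrFun hcross 2
  generalize a ⨯₃ b = m at *
  simp only [cross_apply, Matrix.cons_val, Pi.zero_apply, sub_eq_zero] at h0 h1 h2
  fin_cases i <;> fin_cases j <;> simp_all

theorem isHomogeneous_cross {R σ : Type*} [CommRing R] {a b : Fin 3 → MvPolynomial σ R}
    {m n : ℕ} (ha : ∀ i, (a i).IsHomogeneous m) (hb : ∀ i, (b i).IsHomogeneous n) (i : Fin 3) :
    ((a ⨯₃ b) i).IsHomogeneous (m + n) := by
  rw [cross_apply]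
  fin_cases i <;> exact ((ha _).mul (hb _)).sub ((ha _).mul (hb _))

end Proportionality

section NormalDirections

theorem exists_mul_add_mul_eq_one {k ι σ : Type*} [Field k] [Fintype ι] [DecidableEq ι] [Fintype σ]
    [DecidableEq σ] {n : ℕ} (hn : Fintype.card ι = Fintype.card σ + n) {M : Matrix ι σ k}
    {Q : Matrix σ ι k} (hQM : Q * M = 1) :
    ∃ (N : Matrix ι (Fin n) k) (R : Matrix (Fin n) ι k), M * Q + N * R = 1 := by
  have hsurj : LinearMap.range Q.toLin' = ⊤ := LinearMap.range_eq_top.2 fun x =>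
    ⟨M *ᵥ x, by simp [Matrix.mulVec_mulVec, hQM]⟩
  have hker : Module.finrank k (LinearMap.ker Q.toLin') = n := by
    have hrank := Q.toLin'.finrank_range_add_finrank_ker
    rw [hsurj, finrank_top, Module.finrank_fintype_fun_eq_card,
      Module.finrank_fintype_fun_eq_card, hn] at hrank
    omega
  let e := (Module.finBasisOfFinrankEq k (LinearMap.ker Q.toLin') hker).equivFun
  let π := (1 - M * Q).toLin'.codRestrict (LinearMap.ker Q.toLin') fun x => by
    simp [Matrix.mulVec_sub, Matrix.mulVec_mulVec, ← Matrix.mul_assoc, hQM]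
  refine ⟨LinearMap.toMatrix' (Submodule.subtype _ ∘ₗ e.symm.toLinearMap),
    LinearMap.toMatrix' (e.toLinearMap ∘ₗ π), ?_⟩
  have hfactor : (Submodule.subtype _ ∘ₗ e.symm.toLinearMap) ∘ₗ (e.toLinearMap ∘ₗ π) =
      (1 - M * Q).toLin' := by
    ext x
    simp [π]
  rw [← LinearMap.toMatrix'_comp, hfactor, LinearMap.toMatrix'_toLin', add_sub_cancel]

variable {k ι σ : Type*} [CommRing k] [Fintype σ]

/-- The gradient of `F` along the image of `M`: the partial derivatives of `F` pulled back along
the linear map `x ↦ M *ᵥ x`. -/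
noncomputable def gradientAlong (M : Matrix ι σ k) (F : MvPolynomial ι k) :
    ι → MvPolynomial σ k :=
  fun i => linearSubst M (pderiv i F)

variable [Fintype ι]

theorem gradientAlong_vecMul_eq_zero {M : Matrix ι σ k} {F : MvPolynomial ι k}
    (hF : linearSubst M F = 0) : gradientAlong M F ᵥ* M.map C = 0 := by
  ext1 j
  exact (pderiv_linearSubst M F j).symm.trans (by rw [hF, map_zero, Pi.zero_apply])

theorem gradientAlong_eq_vecMul_vecMul {κ : Type*} [Fintype κ] [DecidableEq ι] {M : Matrix ι σ k}
    {Q : Matrix σ ι k} {N : Matrix ι κ k} {R : Matrix κ ι k} (hMQ : M * Q + N * R = 1)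
    {F : MvPolynomial ι k} (hF : linearSubst M F = 0) :
    gradientAlong M F = gradientAlong M F ᵥ* N.map C ᵥ* R.map C := by
  calc
    gradientAlong M F = gradientAlong M F ᵥ* (M * Q + N * R).map C := by
      rw [hMQ, Matrix.map_one _ (map_zero C) (map_one C), Matrix.vecMul_one]
    _ = gradientAlong M F ᵥ* M.map C ᵥ* Q.map C + gradientAlong M F ᵥ* N.map C ᵥ* R.map C := by
      rw [Matrix.map_add _ (map_add C), Matrix.map_mul, Matrix.map_mul, Matrix.vecMul_add,
        Matrix.vecMul_vecMul, Matrix.vecMul_vecMul]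
    _ = gradientAlong M F ᵥ* N.map C ᵥ* R.map C := by
      rw [gradientAlong_vecMul_eq_zero hF, Matrix.zero_vecMul, zero_add]

theorem isHomogeneous_gradientAlong_vecMul {κ : Type*} {F : MvPolynomial ι k} {d : ℕ}
    (hF : F.IsHomogeneous d) (M : Matrix ι σ k) (N : Matrix ι κ k) (i : κ) :
    ((gradientAlong M F ᵥ* N.map C) i).IsHomogeneous (d - 1) :=
  IsHomogeneous.sum _ _ _ fun _ _ =>
    (isHomogeneous_linearSubst hF.pderiv M).mul (isHomogeneous_C _ _)

end NormalDirections

section Rigidity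

/-- The ideal generated by `F₁`, `F₂` and the `2 × 2` minors of their Jacobian matrix; it cuts out
the singular locus of the intersection `F₁ = F₂ = 0`. -/
noncomputable def jacobianIdeal {R ι : Type*} [CommRing R] (F₁ F₂ : MvPolynomial ι R) :
    Ideal (MvPolynomial ι R) :=
  Ideal.span ({F₁, F₂} ∪ Set.range fun ij : ι × ι =>
    pderiv ij.1 F₁ * pderiv ij.2 F₂ - pderiv ij.2 F₁ * pderiv ij.1 F₂)

variable {k ι σ : Type*} [Field k] [Fintype ι] [Fintype σ] {M : Matrix ι σ k} {Q : Matrix σ ι k}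
  {F₁ F₂ : MvPolynomial ι k}

theorem jacobianIdeal_le_comap_span_singleton [DecidableEq ι] (h₁ : linearSubst M F₁ = 0)
    (h₂ : linearSubst M F₂ = 0) {N : Matrix ι (Fin 3) k} {R : Matrix (Fin 3) ι k}
    (hMQ : M * Q + N * R = 1) {h : MvPolynomial σ k}
    (hh : ∀ i, h ∣ ((gradientAlong M F₁ ᵥ* N.map C) ⨯₃ (gradientAlong M F₂ ᵥ* N.map C)) i) :
    jacobianIdeal F₁ F₂ ≤ (Ideal.span {h}).comap (linearSubst M) := by
  have hcol : ∀ F, linearSubst M F = 0 → ∀ i, linearSubst M (pderiv i F) =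
      (gradientAlong M F ᵥ* N.map C) ⬝ᵥ (R.map C).col i := fun F hF i =>
    congrFun (gradientAlong_eq_vecMul_vecMul hMQ hF) i
  rw [jacobianIdeal, Ideal.span_le]
  rintro _ ((rfl | rfl) | ⟨⟨i, j⟩, rfl⟩)
  · simp [h₁]
  · simp [h₂]
  · rw [SetLike.mem_coe, Ideal.mem_comap, Ideal.mem_span_singleton]
    simp only [map_sub, map_mul, hcol F₁ h₁, hcol F₂ h₂]
    rw [← cross_dot_cross]
    exact Finset.dvd_sum fun a _ => (hh a).mul_right _

theorem eq_zero_of_gradientAlong_dotProduct_eq_zero [DecidableEq σ]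
    (hcard : Fintype.card ι = Fintype.card σ + 3) {d₁ d₂ : ℕ} (hd : 2 ≤ (d₁ - 1) + (d₂ - 1))
    (hF₁ : F₁.IsHomogeneous d₁) (hF₂ : F₂.IsHomogeneous d₂)
    (hsing : ringKrullDim (MvPolynomial ι k ⧸ jacobianIdeal F₁ F₂) + 2 ≤ Fintype.card σ)
    (hQM : Q * M = 1) (h₁ : linearSubst M F₁ = 0) (h₂ : linearSubst M F₂ = 0)
    {T : Matrix ι σ k} (hQT : Q * T = 0) (hT₁ : gradientAlong M F₁ ⬝ᵥ T.toMvPolynomial = 0)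
    (hT₂ : gradientAlong M F₂ ⬝ᵥ T.toMvPolynomial = 0) : T = 0 := by
  classical
  by_contra hT0
  obtain ⟨N, R, hMQ⟩ := exists_mul_add_mul_eq_one hcard hQM
  have hRT : ∀ F, linearSubst M F = 0 → gradientAlong M F ⬝ᵥ T.toMvPolynomial = 0 →
      (gradientAlong M F ᵥ* N.map C) ⬝ᵥ (R * T).toMvPolynomial = 0 := by
    intro F hF hT
    rwa [toMvPolynomial_mul_eq_mulVec, Matrix.dotProduct_mulVec,
      ← gradientAlong_eq_vecMul_vecMul hMQ hF]
  have hRT0 : R * T ≠ 0 := fun hzero => hT0 <| calc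
    T = (M * Q + N * R) * T := by rw [hMQ, Matrix.one_mul]
    _ = 0 := by simp [Matrix.add_mul, Matrix.mul_assoc, hQT, hzero]
  obtain ⟨h, hh, hdvd⟩ := exists_not_isUnit_forall_dvd (R * T).toMvPolynomial_isHomogeneous
    (fun h0 => hRT0 (toMvPolynomial_injective (h0.trans Matrix.toMvPolynomial_zero.symm))) hd
    (isHomogeneous_cross (isHomogeneous_gradientAlong_vecMul hF₁ M N)
      (isHomogeneous_gradientAlong_vecMul hF₂ M N))
    (mul_cross_eq_of_dotProduct_eq_zero (hRT F₁ h₁ hT₁) (hRT F₂ h₂ hT₂))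
  have hdim := card_le_ringKrullDim_quotient_add_one hh (f := (linearSubst M).toRingHom)
    (linearSubst_surjective hQM) (jacobianIdeal_le_comap_span_singleton h₁ h₂ hMQ hdvd)
  rw [Nat.card_eq_fintype_card] at hdim
  have hlt : (Fintype.card σ : WithBot ℕ∞) + 1 ≤ Fintype.card σ := by
    grw [← hsing, hdim, add_assoc, one_add_one_eq_two]
  exact absurd (mod_cast hlt : Fintype.card σ + 1 ≤ Fintype.card σ) (Nat.not_succ_le_self _)

end Rigidity

section MatrixFamilies

variable {k ι σ : Type*} [Field k] [Fintype ι] [Fintype σ]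

theorem gradientAt_linearSubst (M : Matrix ι σ k) (F : MvPolynomial ι k) (x : σ → k) :
    gradientAt x (linearSubst M F) = gradientAt (M *ᵥ x) F ᵥ* M := by
  ext j
  simp [gradientAt_apply, pderiv_linearSubst, eval_linearSubst, Matrix.vecMul, dotProduct]

theorem finite_setOf_eval_mulVec_eq_zero (G : (σ → k) → Set (MvPolynomial ι k))
    (hG : ∀ M : Matrix ι σ k, (∀ x, ∀ F ∈ G x, eval (M *ᵥ x) F = 0) →
      ∀ T : Matrix ι σ k, (∀ x, ∀ F ∈ G x, gradientAt (M *ᵥ x) F ⬝ᵥ (T *ᵥ x) = 0) → T = 0) :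
    {M : Matrix ι σ k | ∀ x, ∀ F ∈ G x, eval (M *ᵥ x) F = 0}.Finite := by
  classical
  let L (x : σ → k) : Matrix ι (σ × ι) k := .of fun i p => if i = p.2 then x p.1 else 0
  have hL (M : Matrix ι σ k) (x : σ → k) : L x *ᵥ M.vec = M *ᵥ x := by
    ext i
    simp [L, Matrix.mulVec, dotProduct, Fintype.sum_prod_type, Matrix.vec, mul_comm]
  have hfinite : {p : σ × ι → k |
      ∀ g ∈ ⋃ x, linearSubst (L x) '' G x, eval p g = 0}.Finite := by
    refine finite_zeroLocus_of_tangent_eq_zero _ fun p hp t ht => ?_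
    obtain ⟨M, rfl⟩ := Matrix.vec_bijective.surjective p
    obtain ⟨T, rfl⟩ := Matrix.vec_bijective.surjective t
    refine Matrix.vec_eq_zero_iff.2 (hG M (fun x F hF => ?_) T fun x F hF => ?_)
    · rw [← hL, ← eval_linearSubst]
      exact hp _ (Set.mem_iUnion_of_mem x (Set.mem_image_of_mem _ hF))
    · rw [← hL, ← hL, Matrix.dotProduct_mulVec, ← gradientAt_linearSubst]
      exact ht _ (Set.mem_iUnion_of_mem x (Set.mem_image_of_mem _ hF))
  refine (hfinite.preimage Matrix.vec_bijective.injective.injOn).subset fun M hM => ?_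
  simp only [Set.mem_preimage, Set.mem_ofPred_eq, Set.mem_iUnion]
  rintro _ ⟨x, F, hF, rfl⟩
  rw [eval_linearSubst, hL]
  exact hM x F hF

theorem finite_setOf_linearSubst_eq_zero [Infinite k] [DecidableEq σ] (Q : Matrix σ ι k)
    (G : Set (MvPolynomial ι k))
    (hG : ∀ M : Matrix ι σ k, Q * M = 1 → (∀ F ∈ G, linearSubst M F = 0) →
      ∀ T : Matrix ι σ k, Q * T = 0 → (∀ F ∈ G, gradientAlong M F ⬝ᵥ T.toMvPolynomial = 0) →
        T = 0) :
    {M : Matrix ι σ k | Q * M = 1 ∧ ∀ F ∈ G, linearSubst M F = 0}.Finite := by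
  classical
  let G' (x : σ → k) : Set (MvPolynomial ι k) :=
    G ∪ Set.range fun j => Q.toMvPolynomial j - C (x j)
  have hG' (M : Matrix ι σ k) : (∀ x, ∀ F ∈ G' x, eval (M *ᵥ x) F = 0) ↔
      Q * M = 1 ∧ ∀ F ∈ G, linearSubst M F = 0 := by
    have hQ : Q * M = 1 ↔ ∀ x j, (Q *ᵥ (M *ᵥ x)) j = x j := by
      simp only [Matrix.ext_iff_mulVec (A := Q * M), Matrix.mulVec_mulVec, Matrix.one_mulVec,
        funext_iff]
    have hF (F) : linearSubst M F = 0 ↔ ∀ x, eval (M *ᵥ x) F = 0 := by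
      simp only [MvPolynomial.funext_iff, eval_linearSubst, map_zero]
    simp only [G', Set.mem_union, or_imp, forall_and, Set.forall_mem_range, map_sub, eval_C,
      sub_eq_zero, Matrix.toMvPolynomial_eval_eq_apply, hQ, hF]
    grind
  have hT {M T : Matrix ι σ k}
      (h : ∀ x, ∀ F ∈ G' x, gradientAt (M *ᵥ x) F ⬝ᵥ (T *ᵥ x) = 0) :
      Q * T = 0 ∧ ∀ F ∈ G, gradientAlong M F ⬝ᵥ T.toMvPolynomial = 0 := by
    refine ⟨Matrix.ext_iff_mulVec.2 fun x => funext fun j => ?_, fun F hF =>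
      MvPolynomial.funext fun x => ?_⟩
    · have hgrad : gradientAt (M *ᵥ x) (Q.toMvPolynomial j - C (x j)) = Q j := by
        ext i
        simp [gradientAt_apply, pderiv_toMvPolynomial]
      have := h x _ (.inr ⟨j, rfl⟩)
      rw [hgrad] at this
      rwa [← Matrix.mulVec_mulVec, Matrix.zero_mulVec]
    · have := h x F (.inl hF)
      simpa [dotProduct, gradientAlong, eval_linearSubst, gradientAt_apply,
        Matrix.toMvPolynomial_eval_eq_apply] using this
  simp only [← hG']
  refine finite_setOf_eval_mulVec_eq_zero G' fun M hM T h => ?_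
  exact hG M ((hG' M).1 hM).1 ((hG' M).1 hM).2 T (hT h).1 (hT h).2

theorem finite_setOf_linearSubst_pair_eq_zero [Infinite k] [DecidableEq σ]
    (hcard : Fintype.card ι = Fintype.card σ + 3) {d₁ d₂ : ℕ} (hd : 2 ≤ (d₁ - 1) + (d₂ - 1))
    {F₁ F₂ : MvPolynomial ι k} (hF₁ : F₁.IsHomogeneous d₁) (hF₂ : F₂.IsHomogeneous d₂)
    (hsing : ringKrullDim (MvPolynomial ι k ⧸ jacobianIdeal F₁ F₂) + 2 ≤ Fintype.card σ)
    (Q : Matrix σ ι k) :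
    {M : Matrix ι σ k | Q * M = 1 ∧ linearSubst M F₁ = 0 ∧ linearSubst M F₂ = 0}.Finite := by
  simpa using finite_setOf_linearSubst_eq_zero Q {F₁, F₂} fun M hQM hM T hQT hT =>
    eq_zero_of_gradientAlong_dotProduct_eq_zero hcard hd hF₁ hF₂ hsing hQM (hM F₁ (by simp))
      (hM F₂ (by simp)) hQT (hT F₁ (by simp)) (hT F₂ (by simp))

end MatrixFamilies

section Charts

variable {k ι σ : Type*} [Field k] [Fintype σ] [DecidableEq σ]

theorem exists_isUnit_submatrix [Finite ι] {B : Matrix ι σ k} (hB : LinearIndependent k B.col) :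
    ∃ f : σ → ι, IsUnit (B.submatrix f id) := by
  have := Fintype.ofFinite ι
  have hrank : Module.finrank k (Submodule.span k (Set.range B.row)) = Fintype.card σ := by
    rw [← B.rank_eq_finrank_span_row, ← B.rank_transpose, LinearIndependent.rank_matrix hB]
  obtain ⟨v, hv, -, hli⟩ := Submodule.exists_fun_fin_finrank_span_eq k (Set.range B.row)
  choose f hf using hv
  let e := Fintype.equivFinOfCardEq hrank.symm
  have hrow : (B.submatrix (f ∘ e) id).row = v ∘ e := funext fun j => hf (e j)
  exact ⟨f ∘ e, Matrix.linearIndependent_rows_iff_isUnit.1 (hrow ▸ hli.comp e e.injective)⟩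

theorem exists_submatrix_one_mul_eq_one [Fintype ι] [DecidableEq ι] {W : Submodule k (ι → k)}
    (hW : Module.finrank k W = Fintype.card σ) :
    ∃ (f : σ → ι) (M : Matrix ι σ k), (1 : Matrix ι ι k).submatrix f id * M = 1 ∧
      LinearMap.range M.mulVecLin = W := by
  let b := (Module.finBasisOfFinrankEq k W hW).reindex (Fintype.equivFin σ).symm
  let B : Matrix ι σ k := .of fun i j => (b j : ι → k) i
  have hcol : B.col = W.subtype ∘ b := rfl
  have hli : LinearIndependent k B.col := b.linearIndependent.map' W.subtype W.ker_subtype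
  obtain ⟨f, hf⟩ := exists_isUnit_submatrix hli
  have hinv : IsUnit (B.submatrix f id)⁻¹ := Matrix.isUnit_nonsing_inv_iff.2 hf
  refine ⟨f, B * (B.submatrix f id)⁻¹, ?_, ?_⟩
  · have hB : (1 : Matrix ι ι k).submatrix f id * B = B.submatrix f id := by
      ext
      simp [Matrix.mul_apply, Matrix.one_apply]
    rw [← Matrix.mul_assoc, hB, Matrix.mul_nonsing_inv _ ((Matrix.isUnit_iff_isUnit_det _).1 hf)]
  · rw [Matrix.mulVecLin_mul, LinearMap.range_comp_of_range_eq_top _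
        (LinearMap.range_eq_top.2 (Matrix.mulVec_surjective_iff_isUnit.2 hinv)),
      Matrix.range_mulVecLin, hcol, Set.range_comp, Submodule.span_image, b.span_eq,
      Submodule.map_top, Submodule.range_subtype]

end Charts

theorem stmt_6_general {k ι : Type*} [Field k] [Fintype ι] {r : ℕ} (hr : Fintype.card ι = r + 3)
    {d₁ d₂ : ℕ} (hd : 4 ≤ d₁ + d₂) {F₁ F₂ : MvPolynomial ι k}
    (hF₁ : F₁.IsHomogeneous d₁) (hF₂ : F₂.IsHomogeneous d₂)
    (hsing : ringKrullDim (MvPolynomial ι k ⧸ jacobianIdeal F₁ F₂) + 2 ≤ r) :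
    {W : Submodule k (ι → k) |
      Module.finrank k W = r ∧ ∀ x ∈ W, eval x F₁ = 0 ∧ eval x F₂ = 0}.Finite := by
  classical
  cases finite_or_infinite k
  · have : Finite (Submodule k (ι → k)) := .of_injective _ SetLike.coe_injective
    exact Set.toFinite _
  let S (f : Fin r → ι) : Set (Matrix ι (Fin r) k) :=
    {M | (1 : Matrix ι ι k).submatrix f id * M = 1 ∧ linearSubst M F₁ = 0 ∧ linearSubst M F₂ = 0}
  have hS (f : Fin r → ι) : (S f).Finite :=
    finite_setOf_linearSubst_pair_eq_zero (by simpa using hr) (by omega) hF₁ hF₂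
      (by simpa using hsing) _
  refine (Set.finite_iUnion fun f => (hS f).image fun M => LinearMap.range M.mulVecLin).subset ?_
  rintro W ⟨hW, hZ⟩
  obtain ⟨f, M, hM, rfl⟩ := exists_submatrix_one_mul_eq_one (σ := Fin r) (by simpa using hW)
  refine Set.mem_iUnion.2 ⟨f, M, ⟨hM, ?_, ?_⟩, rfl⟩ <;> refine MvPolynomial.funext fun x => ?_
  · rw [eval_linearSubst, map_zero]
    exact (hZ _ ⟨x, rfl⟩).1
  · rw [eval_linearSubst, map_zero]
    exact (hZ _ ⟨x, rfl⟩).2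

/-- Proposition 9.3 of Salberger: an integral `r`-dimensional intersection
`Z ⊂ P^{r+2}` of two hypersurfaces of degrees `d₁`, `d₂` with `d₁d₂ ≥ 4` over an
algebraically closed field of characteristic `0`, whose singular locus has codimension
at least three in `Z`, contains only finitely many `(r-1)`-planes.  Integrality and the
dimension of `Z` are expressed via the ideal `(F₁,F₂)` being prime with quotient of
Krull dimension `r+1`, the singular-locus condition via the Jacobian ideal `J` having
quotient of Krull dimension at most `r-2`, and `(r-1)`-planes correspond to
`r`-dimensional linear subspaces of `k^{r+3}` contained in the affine cone of `Z`. -/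
theorem stmt_6 (k : Type*) [Field k] [IsAlgClosed k] [CharZero k] (r : ℕ) (hr : 2 ≤ r)
    (d₁ d₂ : ℕ) (hd₁ : 0 < d₁) (hd₂ : 0 < d₂) (hd : 4 ≤ d₁ * d₂)
    (F₁ F₂ : MvPolynomial (Fin (r + 3)) k)
    (hhom₁ : F₁.IsHomogeneous d₁) (hhom₂ : F₂.IsHomogeneous d₂)
    (hprime : (Ideal.span {F₁, F₂}).IsPrime)
    (hdim : ringKrullDim (MvPolynomial (Fin (r + 3)) k ⧸ Ideal.span {F₁, F₂})
      = ((r + 1 : ℕ) : WithBot ℕ∞))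
    (hsing : ringKrullDim (MvPolynomial (Fin (r + 3)) k ⧸
        Ideal.span ({F₁, F₂} ∪
          Set.range (fun ij : Fin (r + 3) × Fin (r + 3) =>
            pderiv ij.1 F₁ * pderiv ij.2 F₂ - pderiv ij.2 F₁ * pderiv ij.1 F₂)))
        + 2 ≤ (r : WithBot ℕ∞)) :
    {W : Submodule k (Fin (r + 3) → k) |
      Module.finrank k W = r ∧ ∀ x ∈ W, eval x F₁ = 0 ∧ eval x F₂ = 0}.Finite :=
  stmt_6_general (Fintype.card_fin _) (by nlinarith) hhom₁ hhom₂ hsing
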